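/- Let L be a finite relatively complemented lattice with minimal element 0 and maximal element e, with |L| ≥ 2, and let F = L \ {0}. Then Str(F) = L \ {e}, i.e., F shatters exactly the elements different from e. -/

import Mathlib

open scoped Classical

/-- `F` shatters `z`: for every `x ≤ z` there is `w ∈ F` with `w ⊓ z = x`. -/
def Shatters {L : Type*} [SemilatticeInf L] (F : Set L) (z : L) : Prop :=
  ∀ x ≤ z, ∃ w ∈ F, w ⊓ z = x

/-- The set of elements shattered by `F`. -/
def Str {L : Type*} [SemilatticeInf L] (F : Set L) : Set L := {z | Shatters F z}


/-- A finite lattice is relatively complemented iff it has no 3-element interval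
(Björner's characterization). -/
def IsRC (L : Type*) [Lattice L] : Prop :=
  ¬ ∃ x y : L, x < y ∧ ∃! z : L, x < z ∧ z < y

/-- In a finite RC lattice with at least two elements, the family `L \ {⊥}`
shatters exactly the elements different from `⊤`. -/
theorem str_univ_diff_bot {L : Type*} [Lattice L] [Fintype L] [BoundedOrder L]
    (hRC : IsRC L) (hL : Nontrivial L) :
    Str ((Set.univ : Set L) \ {⊥}) = Set.univ \ {⊤} := by
  ext z
  simp only [Str, Shatters, Set.mem_setOf_eq, Set.mem_diff, Set.mem_univ, true_and,
    Set.mem_singleton_iff]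
  constructor
  · rintro h rfl
    obtain ⟨w, hw, hw'⟩ := h ⊥ bot_le
    exact hw (by simpa using hw')
  · intro hz x hx
    by_cases hx0 : x = ⊥
    · subst hx0
      by_contra hcon
      push Not at hcon
      -- a minimal element `w` not below `z` has `w ⊓ z` as its unique lower cover
      obtain ⟨w, hw⟩ := (Set.toFinite {w : L | ¬ w ≤ z}).exists_minimal
        ⟨⊤, fun h => hz (top_le_iff.mp h)⟩
      have hwz : ¬ w ≤ z := hw.prop
      have hlow : ∀ u, u < w → u ≤ w ⊓ z := by
        intro u hu
        refine le_inf hu.le ?_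
        by_contra hnu
        exact absurd (hw.le_of_le hnu hu.le) (not_le_of_gt hu)
      have hm : w ⊓ z < w := lt_of_le_of_ne inf_le_left (fun h => hwz (inf_eq_left.mp h))
      have hm0 : w ⊓ z ≠ ⊥ := hcon w (fun h => hwz (h ▸ bot_le))
      obtain ⟨c, hc⟩ := (Set.toFinite {c : L | c < w ⊓ z}).exists_maximal
        ⟨⊥, bot_lt_iff_ne_bot.mpr hm0⟩
      have hcm : c < w ⊓ z := hc.prop
      refine hRC ⟨c, w, hcm.trans hm, w ⊓ z, ⟨hcm, hm⟩, ?_⟩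
      rintro u ⟨hcu, huw⟩
      by_contra hne
      have hlt : u < w ⊓ z := lt_of_le_of_ne (hlow u huw) hne
      exact absurd (hc.le_of_ge hlt hcu.le) (not_le_of_gt hcu)
    · exact ⟨x, hx0, inf_eq_left.mpr hx⟩
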